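/- arXiv:2010.13725 — 3 statements merged into one kernel-verified Lean document; each statement's English description precedes it below -/
import Mathlib

section
/- Fix an integer N_r ≥ 2 and a real number p with 0 < p ≤ 1. For every p' ∈ [0,1], π₁(p, p', N_r) ≤ π₁(p, 1, N_r); that is, the steady-state collision probability is maximized over p' ∈ [0,1] at p' = 1 (equivalently, the packet reception ratio PRR = 1 − π₁ is minimized at p' = 1). -/
theorem stmt_3 (Nr : ℕ) (hNr : 2 ≤ Nr) (p : ℝ) (hp : 0 < p) (hp1 : p ≤ 1) :
    ∀ p' ∈ Set.Icc (0:ℝ) 1,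
      p' / (((Nr : ℝ) - 1) * (p + p' * (1 - p) + (p' * (1 - p)) / ((Nr : ℝ) - 1))) ≤
      1 / (((Nr : ℝ) - 1) * (p + 1 * (1 - p) + (1 * (1 - p)) / ((Nr : ℝ) - 1))) := by
  rintro q ⟨hq0, hq1⟩
  have hN : (2 : ℝ) ≤ (Nr : ℝ) := by exact_mod_cast hNr
  obtain ⟨M, hM⟩ : ∃ M : ℝ, M = (Nr : ℝ) - 1 := ⟨_, rfl⟩
  rw [← hM]
  have hM0 : 0 < M := by linarith
  have key : ∀ x : ℝ, M * (p + x * (1 - p) + (x * (1 - p)) / M)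
      = M * p + x * ((M + 1) * (1 - p)) := by
    intro x
    field_simp
    ring
  rw [key, key]
  have hMp : 0 < M * p := mul_pos hM0 hp
  have hc : 0 ≤ (M + 1) * (1 - p) := mul_nonneg (by linarith) (by linarith)
  have hqc := mul_nonneg hq0 hc
  rw [div_le_div_iff₀ (by linarith) (by linarith)]
  nlinarith [mul_nonneg hMp.le (sub_nonneg.2 hq1)]
end

section
/- Fix an integer N_r ≥ 2 and a real number p with 0 < p ≤ 1. Then π₁(p, 1, N_r) = 1 / (N_r − p), and consequently π₁(p, p', N_r) ≤ 1 / (N_r − p) for every p' ∈ [0,1]. -/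
theorem stmt_4 (Nr : ℕ) (hNr : 2 ≤ Nr) (p : ℝ) (hp : 0 < p) (hp1 : p ≤ 1) :
    1 / (((Nr : ℝ) - 1) * (p + 1 * (1 - p) + (1 * (1 - p)) / ((Nr : ℝ) - 1))) =
      1 / ((Nr : ℝ) - p) ∧
    ∀ p' ∈ Set.Icc (0:ℝ) 1,
      p' / (((Nr : ℝ) - 1) * (p + p' * (1 - p) + (p' * (1 - p)) / ((Nr : ℝ) - 1))) ≤
        1 / ((Nr : ℝ) - p) := by
  have hN : (2:ℝ) ≤ Nr := by exact_mod_cast hNr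
  have hN1 : (0:ℝ) < (Nr : ℝ) - 1 := by linarith
  have key : ∀ q : ℝ, ((Nr : ℝ) - 1) * (p + q * (1 - p) + (q * (1 - p)) / ((Nr : ℝ) - 1)) =
      ((Nr : ℝ) - 1) * p + q * (1 - p) * Nr := by
    intro q
    rw [mul_add, mul_div_cancel₀ _ hN1.ne']
    ring
  constructor
  · rw [key]
    congr 1
    ring
  · rintro q ⟨hq0, hq1⟩
    rw [key]
    have h1 : 0 < ((Nr : ℝ) - 1) * p := mul_pos hN1 hp
    have h2 : 0 ≤ q * (1 - p) * (Nr : ℝ) :=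
      mul_nonneg (mul_nonneg hq0 (by linarith)) (by linarith)
    rw [div_le_div_iff₀ (by linarith) (by linarith)]
    nlinarith [mul_nonneg h1.le (sub_nonneg.2 hq1)]
end

section
/- Fix an integer N_r ≥ 2 and real numbers p, p' ∈ [0,1] with p + p' > 0. Let π₁ = p' / ((N_r − 1) · (p + p'·(1 − p) + (p'·(1 − p))/(N_r − 1))) and π₀ = 1 − π₁. Then the row vector (π₀, π₁) is a stationary distribution of the 2×2 matrix M with entries M₀₀ = 1 − p'/(N_r − 1), M₀₁ = p'/(N_r − 1), M₁₀ = 1 − (1 − p)·(1 − p') − p·p'/(N_r − 1), M₁₁ = (1 − p)·(1 − p') + p·p'/(N_r − 1); that is, π₀·M₀₀ + π₁·M₁₀ = π₀ and π₀·M₀₁ + π₁·M₁₁ = π₁. -/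
theorem stmt_10 (Nr : ℕ) (hNr : 2 ≤ Nr) (p p' : ℝ)
    (hp : p ∈ Set.Icc (0:ℝ) 1) (hp' : p' ∈ Set.Icc (0:ℝ) 1) (hpos : 0 < p + p')
    (π₁ π₀ : ℝ)
    (hπ₁ : π₁ = p' / (((Nr : ℝ) - 1) * (p + p' * (1 - p) + (p' * (1 - p)) / ((Nr : ℝ) - 1))))
    (hπ₀ : π₀ = 1 - π₁)
    (M : Matrix (Fin 2) (Fin 2) ℝ)
    (hM : M = !![1 - p' / ((Nr : ℝ) - 1), p' / ((Nr : ℝ) - 1);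
                 1 - (1 - p) * (1 - p') - p * p' / ((Nr : ℝ) - 1),
                 (1 - p) * (1 - p') + p * p' / ((Nr : ℝ) - 1)]) :
    π₀ * M 0 0 + π₁ * M 1 0 = π₀ ∧ π₀ * M 0 1 + π₁ * M 1 1 = π₁ := by
  obtain ⟨h0, h1⟩ := hp
  obtain ⟨h0', h1'⟩ := hp'
  have hN : (2:ℝ) ≤ (Nr : ℝ) := by exact_mod_cast hNr
  obtain ⟨n, hn⟩ : ∃ n : ℝ, n = (Nr : ℝ) - 1 := ⟨_, rfl⟩
  rw [← hn] at hπ₁ hM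
  have hn0 : 0 < n := by linarith
  have hA : 0 < p + p' * (1 - p) := by
    rcases h0.eq_or_lt with h | h
    · subst h
      linarith
    · have := mul_nonneg h0' (sub_nonneg.2 h1)
      linarith
  have hB : 0 ≤ p' * (1 - p) / n :=
    div_nonneg (mul_nonneg h0' (sub_nonneg.2 h1)) hn0.le
  have hD : p + p' * (1 - p) + p' * (1 - p) / n ≠ 0 := by linarith
  have key : π₁ * (p + p' * (1 - p) + p' * (1 - p) / n) = p' / n := by
    rw [hπ₁, ← div_div, div_mul_cancel₀ _ hD]
  have e1 : p' * (1 - p) / n = p' / n - p * (p' / n) := by ring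
  have e2 : p * p' / n = p * (p' / n) := by ring
  rw [e1] at key
  subst hM hπ₀
  simp only [Matrix.of_apply, Matrix.cons_val', Matrix.cons_val_zero, Matrix.cons_val_one,
    Matrix.cons_val_fin_one, e2]
  constructor
  · linear_combination key
  · linear_combination -key
end
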